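/- Let k ≥ 2 and t ≥ 2 be fixed integers. Then there exists n₀ such that for all integers n ≥ n₀, the Ramsey number satisfies R(K_{k+1}, K₁ + nK_t) = k·n·t + 1. -/

import Mathlib

open SimpleGraph

/-- `containsCopy F G` : the graph `F` contains a copy of the graph `G` (as a subgraph). -/
def containsCopy {V W : Type*} (F : SimpleGraph V) (G : SimpleGraph W) : Prop :=
  ∃ f : G →g F, Function.Injective f

/-- `arrows N G H` : every red/blue coloring of the edges of `K_N` (given by the graph `R` of
red edges, whose complement is the graph of blue edges) contains a red copy of `G` or a
blue copy of `H`. -/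
def arrows {V W : Type*} (N : ℕ) (G : SimpleGraph V) (H : SimpleGraph W) : Prop :=
  ∀ R : SimpleGraph (Fin N), containsCopy R G ∨ containsCopy Rᶜ H

/-- The Ramsey number `R(G, H)`. -/
noncomputable def ramseyNumber {V W : Type*} (G : SimpleGraph V) (H : SimpleGraph W) : ℕ :=
  sInf { N : ℕ | 0 < N ∧ arrows N G H }

/-- The generalized fan `K₁ + nK_t` : the join of a single vertex (`none`) with `n` disjoint
copies of `K_t`. -/
def genFan (n t : ℕ) : SimpleGraph (Option (Fin n × Fin t)) :=
  SimpleGraph.fromRel (fun a b =>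
    a = none ∨ ∃ p q : Fin n × Fin t, a = some p ∧ b = some q ∧ p.1 = q.1)

/-- A graph `G` is edge-critical if it has an edge `e` with `χ(G - e) = χ(G) - 1`. -/
def EdgeCritical {V : Type*} (G : SimpleGraph V) : Prop :=
  ∃ u v : V, G.Adj u v ∧ (G.deleteEdges {s(u, v)}).chromaticNumber + 1 = G.chromaticNumber

/-- `K_m ⊔ K_{1,ℓ}` : the complete graph on the `m` vertices `some i`, together with one new
vertex `none` joined to exactly the `ℓ` vertices `some i` with `i < ℓ` (for `ℓ ≤ m`). -/
def KstarK (m ℓ : ℕ) : SimpleGraph (Option (Fin m)) :=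
  SimpleGraph.fromRel (fun a b =>
    ((∃ i : Fin m, a = some i) ∧ ∃ j : Fin m, b = some j) ∨
      (a = none ∧ ∃ j : Fin m, b = some j ∧ (j : ℕ) < ℓ))

/-- `starArrows m ℓ G H` : every red/blue coloring of the edges of `K_m ⊔ K_{1,ℓ}` (the red
edges forming a subgraph `R`, the blue edges the remaining edges) contains a red copy of `G`
or a blue copy of `H`. -/
def starArrows {V W : Type*} (m ℓ : ℕ) (G : SimpleGraph V) (H : SimpleGraph W) : Prop :=
  ∀ R : SimpleGraph (Option (Fin m)), R ≤ KstarK m ℓ →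
    containsCopy R G ∨ containsCopy (KstarK m ℓ \ R) H

/-- The star-critical Ramsey number `r₊(G, H)`. -/
noncomputable def starRamsey {V W : Type*} (G : SimpleGraph V) (H : SimpleGraph W) : ℕ :=
  sInf { ℓ : ℕ | starArrows (ramseyNumber G H - 1) ℓ G H }

/-- The chromatic number of `G` as a natural number. -/
noncomputable def chromNum {V : Type*} (G : SimpleGraph V) : ℕ := G.chromaticNumber.toNat

/-- `s(G)` : the minimum size of a color class over all proper `χ(G)`-colorings of `G`. -/
noncomputable def minClassSize {V : Type*} (G : SimpleGraph V) : ℕ :=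
  sInf { m : ℕ | ∃ C : G.Coloring (Fin (chromNum G)), ∃ i : Fin (chromNum G),
    m = {v | C v = i}.ncard }

/-- `τ(G)` : the minimum, over all proper `χ(G)`-colorings of `G` having a color class `U_j`
of size `s(G)`, over all vertices `v ∈ U_j` and all other color classes `U_i`, of the number
of neighbors of `v` in `U_i`. -/
noncomputable def tauNum {V : Type*} (G : SimpleGraph V) : ℕ :=
  sInf { m : ℕ | ∃ C : G.Coloring (Fin (chromNum G)), ∃ j : Fin (chromNum G),
    {v | C v = j}.ncard = minClassSize G ∧
    ∃ v, C v = j ∧ ∃ i : Fin (chromNum G), i ≠ j ∧ m = {u | C u = i ∧ G.Adj v u}.ncard }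

/-!
For the lower bound, a Turán graph with `k` parts of size at most `nt` is `k`-colourable, while the
components of its complement have at most `nt` vertices, too few for the connected fan.

For the upper bound, let the red graph on `knt + 1` vertices be `K_{k+1}`-free. Every set of at
least `C = (k + 1 + t).choose (k + 1)` vertices then contains a blue `K_t`, so a vertex of blue
degree at least `nt + C` is the centre of a blue fan, obtained by removing copies of `K_t` greedily
from its neighbourhood. Otherwise the red minimum degree is about `(k - 1)nt`, beyond the
Andrásfai–Erdős–Sós threshold `(3k - 4) / (3k - 1) * knt` once `nt` is large compared with `C`. So
the red graph is `k`-colourable, and a largest colour class is a blue clique on at least `nt + 1`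
vertices.
-/

section FanRamsey

open scoped Finset Function

variable {V W : Type*} {G : SimpleGraph V} {H : SimpleGraph W}

theorem containsCopy_iff_isContained : containsCopy G H ↔ H ⊑ G :=
  ⟨fun ⟨f, hf⟩ => ⟨f.toCopy hf⟩, fun ⟨f⟩ => ⟨f.toHom, f.injective⟩⟩

theorem isContained_of_isClique [Fintype W] {s : Finset V} (hs : G.IsClique s)
    (hcard : Fintype.card W ≤ #s) : H ⊑ G := by
  obtain ⟨e⟩ : Nonempty (W ↪ s) := Function.Embedding.nonempty_of_card_le (by simpa using hcard)
  have hinduce : H ⊑ G.induce s := by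
    rw [induce_eq_top.2 hs]
    exact (IsContained.of_le le_top).trans (isContained_top_iff.2 ⟨e⟩)
  exact hinduce.trans ⟨.induce G s⟩

theorem isContained_compl_of_colorable [Fintype V] [Fintype W] {k m : ℕ} (hG : G.Colorable k)
    (hV : k * m < Fintype.card V) (hW : Fintype.card W ≤ m + 1) : H ⊑ Gᶜ := by
  classical
  obtain ⟨col⟩ := hG
  obtain ⟨i, hi⟩ := Fintype.exists_lt_card_fiber_of_mul_lt_card (f := col) (n := m) (by simpa)
  refine isContained_of_isClique (s := {v | col v = i}) ?_ (hW.trans hi)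
  rw [isClique_compl]
  simpa [Coloring.colorClass, Coloring.colorClasses] using col.isIndepSet_colorClass i

theorem eq_of_reachable_of_forall_adj {α : Type*} {φ : V → α}
    (hφ : ∀ ⦃v w⦄, G.Adj v w → φ v = φ w) {v w : V} (h : G.Reachable v w) : φ v = φ w := by
  obtain ⟨p⟩ := h
  induction p with
  | nil => rfl
  | cons hadj _ ih => exact (hφ hadj).trans ih

theorem free_compl_turanGraph [Fintype W] (hH : H.Preconnected) {k m N : ℕ}
    (hW : m < Fintype.card W) (hN : N ≤ k * m) : H.Free (turanGraph N k)ᶜ := by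
  rintro ⟨f⟩
  have hmod (v w : W) : (f v : ℕ) % k = f w % k :=
    eq_of_reachable_of_forall_adj (fun v w h => by
      simpa [turanGraph_adj] using ((compl_adj _ _ _).1 (f.toHom.map_adj h)).2) (hH v w)
  have hdiv (w : W) : (f w : ℕ) / k < m := Nat.div_lt_of_lt_mul ((f w).2.trans_le hN)
  obtain ⟨v, w, hvw, heq⟩ :=
    Fintype.exists_ne_map_eq_of_card_lt (fun w => (⟨f w / k, hdiv w⟩ : Fin m)) (by simpa using hW)
  refine hvw (f.injective (Fin.ext ?_))
  exact Nat.ext_div_mod (Fin.mk.inj heq) (hmod v w)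

theorem not_arrows_of_not_colorable [Fintype W] {k m N : ℕ} (hG : ¬ G.Colorable k)
    (hH : H.Preconnected) (hW : m < Fintype.card W) (hN : N ≤ k * m) : ¬ arrows N G H := by
  intro h
  rcases h (turanGraph N k) with ⟨f, -⟩ | hblue
  · have hk (v : Fin N) : 0 < k := Nat.pos_of_mul_pos_right (v.pos.trans_le hN)
    let col : (turanGraph N k).Coloring (Fin k) :=
      .mk (fun v => ⟨v % k, Nat.mod_lt _ (hk v)⟩) fun h heq => h (Fin.mk.inj heq)
    exact hG (Colorable.of_hom f ⟨col⟩)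
  · exact free_compl_turanGraph hH hW hN (containsCopy_iff_isContained.1 hblue)

theorem not_colorable_completeGraph (k : ℕ) : ¬ (completeGraph (Fin (k + 1))).Colorable k := by
  intro h
  simpa using IsClique.card_le_of_colorable (s := Finset.univ) (.top _) h

theorem genFan_adj_none {n t : ℕ} {p : Fin n × Fin t} : (genFan n t).Adj none (some p) := by
  simp [genFan]

theorem genFan_adj_some {n t : ℕ} {p q : Fin n × Fin t} :
    (genFan n t).Adj (some p) (some q) ↔ p ≠ q ∧ p.1 = q.1 := by
  simp only [genFan, fromRel_adj]
  aesop

theorem genFan_preconnected (n t : ℕ) : (genFan n t).Preconnected := by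
  have hhub (a : Option (Fin n × Fin t)) : (genFan n t).Reachable none a := by
    cases a with
    | none => rfl
    | some p => exact genFan_adj_none.reachable
  exact fun a b => (hhub a).symm.trans (hhub b)

theorem genFan_isContained_of_isNClique {n t : ℕ} {v : V} {F : Fin n → Finset V}
    (hF : ∀ i, G.IsNClique t (F i)) (hdisj : Pairwise (Disjoint on F))
    (hv : ∀ i, ∀ w ∈ F i, G.Adj v w) : genFan n t ⊑ G := by
  let e (i : Fin n) : Fin t ≃ F i := ((F i).equivFinOfCardEq (hF i).card_eq).symm
  let g (p : Fin n × Fin t) : V := e p.1 p.2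
  have hg (p) : g p ∈ F p.1 := (e p.1 p.2).2
  have hvg (p) : G.Adj v (g p) := hv _ _ (hg p)
  have hginj : g.Injective := by
    rintro ⟨i, j⟩ ⟨i', j'⟩ h
    obtain rfl : i = i' := by
      by_contra hne
      exact Finset.disjoint_left.1 (hdisj hne) (hg (i, j)) (h ▸ hg (i', j'))
    simpa [g, Subtype.val_inj] using h
  let f : Option (Fin n × Fin t) ↪ V :=
    Function.Embedding.optionElim ⟨g, hginj⟩ v fun ⟨p, hp⟩ => (hvg p).ne hp.symm
  have hf {a b} (h : (genFan n t).Adj a b) : G.Adj (f a) (f b) := by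
    match a, b with
    | none, none => exact absurd h (genFan n t).irrefl
    | none, some q => exact hvg q
    | some p, none => exact (hvg p).symm
    | some p, some q =>
      obtain ⟨hne, hfst⟩ := genFan_adj_some.1 h
      exact (hF p.1).isClique (hg p) (hfst ▸ hg q) (hginj.ne hne)
  exact ⟨⟨⟨f, hf⟩, f.injective⟩⟩

theorem exists_isNClique_succ_of_adj {u s : Finset V} {v : V} {a : ℕ} (hv : v ∈ s) (hus : u ⊆ s)
    (hadj : ∀ w ∈ u, G.Adj v w) (h : ∃ c ⊆ u, G.IsNClique a c) :
    ∃ c ⊆ s, G.IsNClique (a + 1) c := by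
  classical
  obtain ⟨c, hcu, hc⟩ := h
  exact ⟨insert v c, Finset.insert_subset hv (hcu.trans hus),
    hc.insert fun w hw => hadj w (hcu hw)⟩

theorem exists_isNClique_or_exists_isNClique_compl (G : SimpleGraph V) (a b : ℕ) (s : Finset V)
    (hs : (a + b).choose a ≤ #s) :
    (∃ c ⊆ s, G.IsNClique a c) ∨ ∃ c ⊆ s, Gᶜ.IsNClique b c := by
  classical
  match a, b with
  | 0, _ => exact .inl ⟨∅, by simp⟩
  | _ + 1, 0 => exact .inr ⟨∅, by simp⟩
  | a + 1, b + 1 =>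
    have hpascal : (a + 1 + (b + 1)).choose (a + 1) =
        (a + (b + 1)).choose a + (a + 1 + b).choose (a + 1) := by
      rw [show a + 1 + (b + 1) = a + (b + 1) + 1 by ring, Nat.choose_succ_succ,
        show a + (b + 1) = a + 1 + b by ring]
    have hpos : 0 < (a + (b + 1)).choose a := Nat.choose_pos (by omega)
    obtain ⟨v, hv⟩ : s.Nonempty := Finset.card_pos.1 (by omega)
    have hsplit : #{w ∈ s | G.Adj v w} + #{w ∈ s | Gᶜ.Adj v w} + 1 = #s := by
      have hinsert : {w ∈ s | ¬ G.Adj v w} = insert v {w ∈ s | Gᶜ.Adj v w} := by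
        ext w
        rcases eq_or_ne v w with rfl | hvw
        · simp [hv]
        · simp [hvw, hvw.symm]
      have hnotMem : v ∉ ({w ∈ s | Gᶜ.Adj v w} : Finset V) := by simp
      rw [add_assoc, ← Finset.card_insert_of_notMem hnotMem, ← hinsert,
        Finset.card_filter_add_card_filter_not]
    rcases le_or_gt ((a + (b + 1)).choose a) #{w ∈ s | G.Adj v w} with hred | hred
    · refine (exists_isNClique_or_exists_isNClique_compl G a (b + 1) _ hred).imp ?_ ?_
      · exact exists_isNClique_succ_of_adj hv (Finset.filter_subset ..) (by simp)
      · exact fun ⟨c, hc, hcl⟩ => ⟨c, hc.trans (Finset.filter_subset ..), hcl⟩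
    · have hblue : (a + 1 + b).choose (a + 1) ≤ #{w ∈ s | Gᶜ.Adj v w} := by omega
      refine (exists_isNClique_or_exists_isNClique_compl G (a + 1) b _ hblue).imp ?_ ?_
      · exact fun ⟨c, hc, hcl⟩ => ⟨c, hc.trans (Finset.filter_subset ..), hcl⟩
      · exact exists_isNClique_succ_of_adj hv (Finset.filter_subset ..) (by simp)

theorem exists_pairwise_disjoint_of_le_card {P : Finset V → Prop} {t C : ℕ}
    (hP : ∀ u : Finset V, C ≤ #u → ∃ c ⊆ u, #c ≤ t ∧ P c) {n : ℕ} {s : Finset V}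
    (hs : n * t + C ≤ #s) :
    ∃ F : Fin n → Finset V, (∀ i, F i ⊆ s ∧ P (F i)) ∧ Pairwise (Disjoint on F) := by
  classical
  induction n generalizing s with
  | zero => exact ⟨Fin.elim0, fun i => i.elim0, fun i => i.elim0⟩
  | succ n ih =>
    rw [Nat.succ_mul] at hs
    obtain ⟨c, hcs, hct, hc⟩ := hP s (by omega)
    have hcard := Finset.card_sdiff_add_card_eq_card hcs
    obtain ⟨F, hF, hdisj⟩ := ih (s := s \ c) (by omega)
    have hcF (i) : Disjoint c (F i) := Finset.disjoint_sdiff.mono_right (hF i).1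
    refine ⟨Fin.cons c F, ?_, ?_⟩
    · exact Fin.cases ⟨hcs, hc⟩ fun i => ⟨(hF i).1.trans Finset.sdiff_subset, (hF i).2⟩
    · intro i j hij
      cases i using Fin.cases <;> cases j using Fin.cases
      · exact absurd rfl hij
      · exact hcF _
      · exact (hcF _).symm
      · exact hdisj (ne_of_apply_ne _ hij)

theorem genFan_isContained_compl_of_le_degree [Fintype V] [DecidableEq V] [DecidableRel G.Adj]
    {n t r : ℕ} {v : V} (hG : G.CliqueFree r) (hv : n * t + (r + t).choose r ≤ Gᶜ.degree v) :
    genFan n t ⊑ Gᶜ := by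
  have hclique (u : Finset V) (hu : (r + t).choose r ≤ #u) :
      ∃ c ⊆ u, #c ≤ t ∧ Gᶜ.IsNClique t c := by
    obtain ⟨c, -, hc⟩ | ⟨c, hcu, hc⟩ := exists_isNClique_or_exists_isNClique_compl G r t u hu
    · exact absurd hc (hG c)
    · exact ⟨c, hcu, hc.card_eq.le, hc⟩
  obtain ⟨F, hF, hdisj⟩ := exists_pairwise_disjoint_of_le_card hclique hv
  exact genFan_isContained_of_isNClique (fun i => (hF i).2) hdisj fun i w hw =>
    (mem_neighborFinset _ _ _).1 ((hF i).1 hw)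

/- The Andrásfai–Erdős–Sós theorem with the minimum degree condition read in the complement, where
it also covers `k = 1`. -/
theorem colorable_of_cliqueFree_of_degree_compl_lt [Fintype V] [DecidableEq V]
    [DecidableRel G.Adj] {k : ℕ} (hG : G.CliqueFree (k + 1))
    (hdeg : ∀ v, (3 * k - 1) * (Gᶜ.degree v + 1) < 3 * Fintype.card V) : G.Colorable k := by
  match k with
  | 0 => exact colorable_zero_iff.2 (cliqueFree_one.1 hG)
  | 1 => exact colorable_one_iff.2 (cliqueFree_two.1 hG)
  | r + 2 =>
    cases isEmpty_or_nonempty V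
    · exact .of_isEmpty _
    apply colorable_of_cliqueFree_lt_minDegree hG
    obtain ⟨v, hv⟩ := G.exists_minimal_degree_vertex
    have hcard : Fintype.card V = G.degree v + (Gᶜ.degree v + 1) := by
      have := G.degree_lt_card_verts v
      rw [degree_compl]
      omega
    have hdegv : (3 * r + 5) * (Gᶜ.degree v + 1) < 3 * (G.degree v + (Gᶜ.degree v + 1)) :=
      hcard ▸ hdeg v
    calc (3 * (r + 2) - 4) * Fintype.card V / (3 * (r + 2) - 1)
        = (3 * r + 2) * (G.degree v + (Gᶜ.degree v + 1)) / (3 * r + 5) := by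
          rw [hcard, show 3 * (r + 2) - 4 = 3 * r + 2 by omega,
            show 3 * (r + 2) - 1 = 3 * r + 5 by omega]
      _ < G.degree v := by
          rw [Nat.div_lt_iff_lt_mul (by omega)]
          linarith
      _ = G.minDegree := hv.symm

theorem genFan_isContained_compl_of_cliqueFree [Fintype V] {k n t : ℕ} (hG : G.CliqueFree (k + 1))
    (hV : k * (n * t) < Fintype.card V) (hn : 3 * k * (k + 1 + t).choose (k + 1) ≤ n * t) :
    genFan n t ⊑ Gᶜ := by
  classical
  by_cases! hdeg : ∃ v, n * t + (k + 1 + t).choose (k + 1) ≤ Gᶜ.degree v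
  · obtain ⟨v, hv⟩ := hdeg
    exact genFan_isContained_compl_of_le_degree hG hv
  · have hcol : G.Colorable k := by
      refine colorable_of_cliqueFree_of_degree_compl_lt hG fun v => ?_
      calc (3 * k - 1) * (Gᶜ.degree v + 1)
          ≤ (3 * k - 1) * (n * t + (k + 1 + t).choose (k + 1)) := Nat.mul_le_mul_left _ (hdeg v)
        _ ≤ 3 * (k * (n * t)) := by
          cases k with
          | zero => simp
          | succ k =>
            rw [show 3 * (k + 1) - 1 = 3 * k + 2 by omega]
            nlinarith
        _ < 3 * Fintype.card V := by gcongr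
    exact isContained_compl_of_colorable hcol hV (by simp)

theorem arrows_completeGraph_genFan {k n t N : ℕ} (hN : k * n * t < N)
    (hn : 3 * k * (k + 1 + t).choose (k + 1) ≤ n * t) :
    arrows N (completeGraph (Fin (k + 1))) (genFan n t) := by
  intro R
  simp only [containsCopy_iff_isContained, ← not_cliqueFree_iff_top_isContained]
  rw [or_iff_not_imp_left, not_not]
  exact fun hR =>
    genFan_isContained_compl_of_cliqueFree hR (by rwa [Fintype.card_fin, ← mul_assoc]) hn

end FanRamsey

theorem statement_14_general (k n t : ℕ) (hn : 3 * k * (k + 1 + t).choose (k + 1) ≤ n * t) :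
    ramseyNumber (completeGraph (Fin (k + 1))) (genFan n t) = k * n * t + 1 := by
  refine IsLeast.csInf_eq ⟨⟨Nat.succ_pos _, ?_⟩, ?_⟩
  · exact arrows_completeGraph_genFan (Nat.lt_succ_self _) hn
  · rintro N ⟨-, hN⟩
    by_contra! hlt
    exact not_arrows_of_not_colorable (not_colorable_completeGraph k) (genFan_preconnected n t)
      (m := n * t) (by simp) (by rw [← mul_assoc]; omega) hN

theorem statement_14 (k t : ℕ) (hk : 2 ≤ k) (ht : 2 ≤ t) :
    ∃ n₀ : ℕ, ∀ n : ℕ, n₀ ≤ n →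
      ramseyNumber (completeGraph (Fin (k + 1))) (genFan n t) = k * n * t + 1 := by
  refine ⟨3 * k * (k + 1 + t).choose (k + 1), fun n hn => statement_14_general k n t ?_⟩
  exact hn.trans (Nat.le_mul_of_pos_right n (by omega))
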